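/- Let Δ ≥ 1, let 𝒢 = (V,(E_t)_{t=1}^τ) be a temporal graph with τ = LΔ for an integer L ≥ 1, and for each i ∈ [L] let ℳ_i be a family of Δ-temporal matchings of 𝒢[Δ(i−1)+1, Δi]. Define T_1[M] := |M| for M ∈ ℳ_1 and, for i > 1 and M ∈ ℳ_i, T_i[M] := max({ |M| + T_{i−1}[M'] : M' ∈ ℳ_{i−1} and M ∪ M' is a Δ-temporal matching of 𝒢 } ∪ {0}). Then for every i ∈ [L] and every M' ∈ ℳ_i with T_i[M'] > 0, there exists a Δ-temporal matching M of 𝒢[1, Δi] such that |M| = T_i[M'] and M[Δ(i−1)+1, Δi] = M'. -/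

import Mathlib

/-- A temporal graph on vertex set `V`: a lifetime `tau` and edge sets `E t`
(undirected edges, modeled as `Sym2 V`) for each time step. Only times
`1 ≤ t ≤ tau` give rise to time edges. -/
structure TemporalGraph (V : Type*) where
  tau : ℕ
  E : ℕ → Finset (Sym2 V)

variable {V : Type*}

/-- `(e, t)` is a time edge of `G`. -/
def IsTimeEdge (G : TemporalGraph V) (et : Sym2 V × ℕ) : Prop :=
  et.1 ∈ G.E et.2 ∧ 1 ≤ et.2 ∧ et.2 ≤ G.tau

/-- Two (undirected) edges share an endpoint. -/
def ShareEndpoint (e f : Sym2 V) : Prop := ∃ v, v ∈ e ∧ v ∈ f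

/-- Two time edges are `Δ`-independent: the edges share no endpoint,
or the time labels are at least `Δ` apart. -/
def DeltaIndep (Δ : ℕ) (x y : Sym2 V × ℕ) : Prop :=
  ¬ ShareEndpoint x.1 y.1 ∨ (Δ : ℤ) ≤ |(x.2 : ℤ) - (y.2 : ℤ)|

/-- A `Δ`-temporal matching of `G`: a set of time edges of `G` that are
pairwise `Δ`-independent. -/
def IsTemporalMatching (G : TemporalGraph V) (Δ : ℕ) (M : Finset (Sym2 V × ℕ)) : Prop :=
  (∀ et ∈ M, IsTimeEdge G et) ∧ ∀ x ∈ M, ∀ y ∈ M, x ≠ y → DeltaIndep Δ x y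

/-- `M[a,b]`: the time edges of `M` with time label between `a` and `b`. -/
def restrict (M : Finset (Sym2 V × ℕ)) (a b : ℕ) : Finset (Sym2 V × ℕ) :=
  M.filter (fun et => a ≤ et.2 ∧ et.2 ≤ b)

/-- `G[a,b]`: the temporal graph on `V` whose time edges are exactly those
time edges of `G` with time label between `a` and `b`. -/
def tgSlice (G : TemporalGraph V) (a b : ℕ) : TemporalGraph V :=
  { tau := G.tau, E := fun t => if a ≤ t ∧ t ≤ b then G.E t else ∅ }

/-- `ν` suffices as a `Δ`-vertex cover bound for `G`: every `Δ` consecutive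
layers can be covered by at most `ν` vertices. -/
def IsDeltaVC (G : TemporalGraph V) (Δ ν : ℕ) : Prop :=
  ∀ i, 1 ≤ i → i ≤ G.tau - Δ + 1 →
    ∃ S : Finset V, S.card ≤ ν ∧
      ∀ t ∈ Finset.Icc i (i + Δ - 1), ∀ e ∈ G.E t, ∃ v ∈ S, v ∈ e

/-- `ν` is the `Δ`-vertex cover number of `G` (the minimum such bound). -/
def IsDeltaVCNum (G : TemporalGraph V) (Δ ν : ℕ) : Prop :=
  IsDeltaVC G Δ ν ∧ ∀ μ, IsDeltaVC G Δ μ → ν ≤ μ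

/-- The maximum size of a `Δ`-temporal matching of `G`. -/
noncomputable def maxMatchingSize (G : TemporalGraph V) (Δ : ℕ) : ℕ :=
  sSup { k | ∃ M : Finset (Sym2 V × ℕ), IsTemporalMatching G Δ M ∧ M.card = k }

/-- A family `ℳ` of sets of time edges is `d`-complete for `G` (w.r.t. `Δ`):
for every `Δ`-temporal matching `M` of `G` there is `M' ∈ ℳ` such that
`(M \ M[Δ(d-1)+1, Δd]) ∪ M'` is a `Δ`-temporal matching of `G` of size at
least `|M|`. -/
def DComplete {V : Type*} [DecidableEq V] (G : TemporalGraph V) (Δ d : ℕ)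
    (ℳ : Finset (Finset (Sym2 V × ℕ))) : Prop :=
  ∀ M : Finset (Sym2 V × ℕ), IsTemporalMatching G Δ M →
    ∃ M' ∈ ℳ,
      IsTemporalMatching G Δ ((M \ restrict M (Δ * (d - 1) + 1) (Δ * d)) ∪ M') ∧
      M.card ≤ ((M \ restrict M (Δ * (d - 1) + 1) (Δ * d)) ∪ M').card

open Classical in
/-- The dynamic-programming table: `Ttab G Δ ℳ 1 M = |M|`, and for `i > 1`,
`Ttab G Δ ℳ i M = max({|M| + Ttab G Δ ℳ (i-1) M' : M' ∈ ℳ (i-1), M ∪ M' is a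
Δ-temporal matching of G} ∪ {0})`. (The value at `i = 0` is irrelevant.) -/
noncomputable def Ttab {V : Type*} [DecidableEq V] (G : TemporalGraph V) (Δ : ℕ)
    (ℳ : ℕ → Finset (Finset (Sym2 V × ℕ))) :
    ℕ → Finset (Sym2 V × ℕ) → ℕ
  | 0, M => M.card
  | 1, M => M.card
  | (i + 2), M =>
      ((ℳ (i + 1)).filter (fun M' => IsTemporalMatching G Δ (M ∪ M'))).sup
        (fun M' => M.card + Ttab G Δ ℳ (i + 1) M')

/-! Extend backwards in time: an optimal predecessor `N` of `M'` in the table is, by induction, the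
last window of a matching `M₁` of size `T[N]`, and `M' ∪ M₁` is again a matching. Indeed a time edge
of `M₁` either lies in `N`, which is compatible with `M'` by the choice of `N`, or precedes `M'` by
a whole window, hence by at least `Δ` time steps. If `T[N] = 0`, take `M₁ = ∅` instead: the gluing
only needs the last window of `M₁` to be contained in `N`. -/

variable {G : TemporalGraph V} {Δ : ℕ} {M M' N : Finset (Sym2 V × ℕ)} {x y : Sym2 V × ℕ}

theorem DeltaIndep.symm (h : DeltaIndep Δ x y) : DeltaIndep Δ y x :=
  h.imp (fun hxy ⟨v, hy, hx⟩ => hxy ⟨v, hx, hy⟩) (fun hxy => by rwa [abs_sub_comm])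

theorem deltaIndep_of_add_le (h : x.2 + Δ ≤ y.2) : DeltaIndep Δ x y := by
  right
  rw [abs_sub_comm]
  exact le_trans (by omega) (le_abs_self _)

theorem isTimeEdge_tgSlice_iff {a b : ℕ} :
    IsTimeEdge (tgSlice G a b) x ↔ IsTimeEdge G x ∧ a ≤ x.2 ∧ x.2 ≤ b := by
  by_cases h : a ≤ x.2 ∧ x.2 ≤ b <;> simp [IsTimeEdge, tgSlice, h]

theorem isTemporalMatching_tgSlice_iff {a b : ℕ} :
    IsTemporalMatching (tgSlice G a b) Δ M ↔
      IsTemporalMatching G Δ M ∧ ∀ x ∈ M, a ≤ x.2 ∧ x.2 ≤ b := by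
  simp only [IsTemporalMatching, isTimeEdge_tgSlice_iff, forall_and]
  tauto

theorem isTemporalMatching_empty : IsTemporalMatching G Δ ∅ := by
  simp [IsTemporalMatching]

theorem IsTemporalMatching.subset (hM : IsTemporalMatching G Δ M) (h : N ⊆ M) :
    IsTemporalMatching G Δ N :=
  ⟨fun x hx => hM.1 x (h hx), fun x hx y hy => hM.2 x (h hx) y (h hy)⟩

theorem restrict_eq_self {a b : ℕ} (hM : ∀ x ∈ M, a ≤ x.2 ∧ x.2 ≤ b) : restrict M a b = M :=
  Finset.filter_true_of_mem hM

section Union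

variable [DecidableEq V]

theorem restrict_union_eq_left {a b : ℕ} (hM : ∀ x ∈ M, a ≤ x.2 ∧ x.2 ≤ b)
    (hN : ∀ x ∈ N, x.2 < a) : restrict (M ∪ N) a b = M := by
  have hempty : restrict N a b = ∅ :=
    Finset.filter_false_of_mem fun x hx h => (hN x hx).not_ge h.1
  calc restrict (M ∪ N) a b = restrict M a b ∪ restrict N a b := Finset.filter_union _ _ _
    _ = M := by rw [restrict_eq_self hM, hempty, Finset.union_empty]

theorem card_union_of_le_of_lt {a : ℕ} (hM : ∀ x ∈ M, a ≤ x.2) (hN : ∀ x ∈ N, x.2 < a) :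
    (M ∪ N).card = M.card + N.card :=
  Finset.card_union_of_disjoint <|
    Finset.disjoint_left.2 fun x hxM hxN => (hN x hxN).not_ge (hM x hxM)

theorem IsTemporalMatching.union (hM : IsTemporalMatching G Δ M) (hN : IsTemporalMatching G Δ N)
    (hMN : ∀ x ∈ M, ∀ y ∈ N, x ≠ y → DeltaIndep Δ x y) : IsTemporalMatching G Δ (M ∪ N) := by
  refine ⟨fun x hx => (Finset.mem_union.1 hx).elim (hM.1 x) (hN.1 x), fun x hx y hy hxy => ?_⟩
  rcases Finset.mem_union.1 hx with hx | hx <;> rcases Finset.mem_union.1 hy with hy | hy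
  · exact hM.2 x hx y hy hxy
  · exact hMN x hx y hy hxy
  · exact (hMN y hy x hx hxy.symm).symm
  · exact hN.2 x hx y hy hxy

theorem IsTemporalMatching.union_of_restrict_subset {a b : ℕ} (hab : a + Δ ≤ b)
    (hM : IsTemporalMatching G Δ M) (hMb : ∀ x ∈ M, x.2 ≤ b)
    (hM'N : IsTemporalMatching G Δ (M' ∪ N)) (hM'b : ∀ y ∈ M', b < y.2)
    (hMN : restrict M (a + 1) b ⊆ N) : IsTemporalMatching G Δ (M' ∪ M) := by
  refine (hM'N.subset Finset.subset_union_left).union hM fun y hy x hx hyx => ?_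
  rcases le_or_gt x.2 a with hxa | hax
  · have hxy : x.2 + Δ ≤ y.2 := by linarith [hM'b y hy]
    exact (deltaIndep_of_add_le hxy).symm
  · have hxN : x ∈ N := hMN (Finset.mem_filter.2 ⟨hx, hax, hMb x hx⟩)
    exact hM'N.2 y (Finset.mem_union_left N hy) x (Finset.mem_union_right M' hxN) hyx

theorem IsTemporalMatching.union_tgSlice {a b c l : ℕ} (hab : a + Δ ≤ b) (hbc : b ≤ c)
    (hlb : l ≤ b + 1) (hM : IsTemporalMatching (tgSlice G l b) Δ M)
    (hM'N : IsTemporalMatching G Δ (M' ∪ N)) (hM' : ∀ y ∈ M', b + 1 ≤ y.2 ∧ y.2 ≤ c)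
    (hMN : restrict M (a + 1) b ⊆ N) : IsTemporalMatching (tgSlice G l c) Δ (M' ∪ M) := by
  obtain ⟨hMmatch, hMtime⟩ := isTemporalMatching_tgSlice_iff.1 hM
  refine isTemporalMatching_tgSlice_iff.2 ⟨?_, fun x hx => ?_⟩
  · exact hMmatch.union_of_restrict_subset hab (fun x hx => (hMtime x hx).2) hM'N
      (fun y hy => (hM' y hy).1) hMN
  · rcases Finset.mem_union.1 hx with hx | hx
    · exact ⟨hlb.trans (hM' x hx).1, (hM' x hx).2⟩
    · exact ⟨(hMtime x hx).1, (hMtime x hx).2.trans hbc⟩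

theorem exists_Ttab_eq_card_add {ℳ : ℕ → Finset (Finset (Sym2 V × ℕ))} {i : ℕ}
    (h : 0 < Ttab G Δ ℳ (i + 2) M) :
    ∃ N ∈ ℳ (i + 1), IsTemporalMatching G Δ (M ∪ N) ∧
      Ttab G Δ ℳ (i + 2) M = M.card + Ttab G Δ ℳ (i + 1) N := by
  classical
  rw [Ttab] at h ⊢
  obtain ⟨N₀, hN₀, -⟩ := Finset.lt_sup_iff.1 h
  obtain ⟨N, hN, hsup⟩ := Finset.exists_mem_eq_sup _ ⟨N₀, hN₀⟩
    (fun N => M.card + Ttab G Δ ℳ (i + 1) N)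
  obtain ⟨hNℳ, hMN⟩ := Finset.mem_filter.1 hN
  exact ⟨N, hNℳ, hMN, hsup⟩

/-- Window `i + 1` consists of the time steps in `(b i, b (i + 1)]`; `b i = Δ * i` gives the
windows of `statement10`. -/
theorem statement10_general (b : ℕ → ℕ) (hb : ∀ i, b i + Δ ≤ b (i + 1))
    (ℳ : ℕ → Finset (Finset (Sym2 V × ℕ))) (i : ℕ)
    (hmatch : ∀ j ≤ i, ∀ M ∈ ℳ (j + 1),
      IsTemporalMatching (tgSlice G (b j + 1) (b (j + 1))) Δ M)
    (hM' : M' ∈ ℳ (i + 1)) (hpos : 0 < Ttab G Δ ℳ (i + 1) M') :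
    ∃ M : Finset (Sym2 V × ℕ),
      IsTemporalMatching (tgSlice G 1 (b (i + 1))) Δ M ∧
      M.card = Ttab G Δ ℳ (i + 1) M' ∧
      restrict M (b i + 1) (b (i + 1)) = M' := by
  induction i generalizing M' with
  | zero =>
    obtain ⟨hM'match, hM'time⟩ := isTemporalMatching_tgSlice_iff.1 (hmatch 0 le_rfl M' hM')
    refine ⟨M', isTemporalMatching_tgSlice_iff.2 ⟨hM'match, fun x hx => ?_⟩, rfl,
      restrict_eq_self hM'time⟩
    exact ⟨(hM'match.1 x hx).2.1, (hM'time x hx).2⟩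
  | succ i ih =>
    obtain ⟨N, hN, hM'N, hT⟩ := exists_Ttab_eq_card_add hpos
    obtain ⟨M₁, hM₁, hcard, hM₁N⟩ : ∃ M₁, IsTemporalMatching (tgSlice G 1 (b (i + 1))) Δ M₁ ∧
        M₁.card = Ttab G Δ ℳ (i + 1) N ∧ restrict M₁ (b i + 1) (b (i + 1)) ⊆ N := by
      rcases Nat.eq_zero_or_pos (Ttab G Δ ℳ (i + 1) N) with hzero | hNpos
      · exact ⟨∅, isTemporalMatching_empty, hzero.symm, Finset.empty_subset N⟩
      · obtain ⟨M₁, hM₁, hcard, hrestrict⟩ :=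
          ih (fun j hj => hmatch j (Nat.le_succ_of_le hj)) hN hNpos
        exact ⟨M₁, hM₁, hcard, hrestrict.subset⟩
    obtain ⟨-, hM'time⟩ := isTemporalMatching_tgSlice_iff.1 (hmatch (i + 1) le_rfl M' hM')
    have hM₁lt : ∀ x ∈ M₁, x.2 < b (i + 1) + 1 := fun x hx =>
      Nat.lt_succ_of_le ((isTemporalMatching_tgSlice_iff.1 hM₁).2 x hx).2
    refine ⟨M' ∪ M₁, ?_, ?_, restrict_union_eq_left hM'time hM₁lt⟩
    · exact hM₁.union_tgSlice (hb i) (Nat.le_of_add_right_le (hb (i + 1))) (by omega) hM'N hM'time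
        hM₁N
    · rw [card_union_of_le_of_lt (fun x hx => (hM'time x hx).1) hM₁lt, hcard, hT]

end Union

/-- Let `tau = L·Δ` and for each `i ∈ [L]` let `ℳ i` be a
family of `Δ`-temporal matchings of `G[Δ(i-1)+1, Δi]`. Then for every `i ∈ [L]`
and every `M' ∈ ℳ i` with `T_i[M'] > 0`, there is a `Δ`-temporal matching `M`
of `G[1, Δi]` with `|M| = T_i[M']` and `M[Δ(i-1)+1, Δi] = M'`. -/
theorem statement10 {V : Type*} [DecidableEq V] (Δ L : ℕ) (hΔ : 1 ≤ Δ) (hL : 1 ≤ L)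
    (G : TemporalGraph V) (htau : G.tau = L * Δ)
    (ℳ : ℕ → Finset (Finset (Sym2 V × ℕ)))
    (hmatch : ∀ i ∈ Finset.Icc 1 L, ∀ M ∈ ℳ i,
      IsTemporalMatching (tgSlice G (Δ * (i - 1) + 1) (Δ * i)) Δ M) :
    ∀ i ∈ Finset.Icc 1 L, ∀ M' ∈ ℳ i, 0 < Ttab G Δ ℳ i M' →
      ∃ M : Finset (Sym2 V × ℕ),
        IsTemporalMatching (tgSlice G 1 (Δ * i)) Δ M ∧
        M.card = Ttab G Δ ℳ i M' ∧
        restrict M (Δ * (i - 1) + 1) (Δ * i) = M' := by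
  rintro (_ | i) hi M' hM' hpos
  · simp at hi
  · exact statement10_general (Δ * ·) (fun _ => le_rfl) ℳ i
      (fun j hj => hmatch (j + 1) (by grind)) hM' hpos
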